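/- Let $N_1, N_2, \bar N$ be lattices with surjective homomorphisms $h_1: N_1\to \bar N$, $h_2: N_2\to \bar N$, and let $\sigma_1, \sigma_2, \bar\sigma$ be strictly convex rational polyhedral cones with $\bar\sigma = h_{1,\mathbb{R}}(\sigma_1) = h_{2,\mathbb{R}}(\sigma_2)$. Then the set $\sigma_1\times_{\bar N}\sigma_2 = \{(v_1,v_2) : v_i\in\sigma_i,\ h_1(v_1)=h_2(v_2)\}$ is a rational polyhedral cone on the lattice $N_1\times_{\bar N} N_2 = \{(v_1,v_2)\in N_1\oplus N_2 : h_1(v_1)=h_2(v_2)\}$, and its dual cone is the image of $\sigma_1^\vee\times\sigma_2^\vee$ under the natural surjection $M_1\oplus M_2 \to (M_1\oplus M_2)/\bar M$. -/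

import Mathlib

/-- The convex cone generated by a set `S`. -/
def coneHull {E : Type*} [AddCommMonoid E] [Module ℝ E] (S : Set E) : Set E :=
  {x | ∃ (T : Finset E) (c : E → ℝ), ↑T ⊆ S ∧ (∀ t, 0 ≤ c t) ∧ x = ∑ t ∈ T, c t • t}

/-- The real extension of a `ℤ`-linear map between `ℤ^a` and `ℤ^b`. -/
noncomputable def realify {a b : ℕ} (f : (Fin a → ℤ) →ₗ[ℤ] (Fin b → ℤ)) :
    (Fin a → ℝ) →ₗ[ℝ] (Fin b → ℝ) :=
  Matrix.toLin' ((LinearMap.toMatrix' f).map (Int.cast : ℤ → ℝ))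

/-- Inclusion of the lattice `ℤ^a` into `ℝ^a`. -/
def toRa {a : ℕ} (v : Fin a → ℤ) : Fin a → ℝ := fun i => (v i : ℝ)

/-!
The fiber product is the section of `σ₁ × σ₂` by the kernel of `(v₁, v₂) ↦ h₁ v₁ - h₂ v₂`, so both
claims reduce to cutting a finitely generated cone by one hyperplane `φ = 0` at a time. Such a
section is generated by the generators `s` with `φ s = 0` and the combinations `φ p • n - φ n • p`
of generators with `φ n < 0 < φ p`; these are lattice points when `φ` is integral on the lattice.
A functional `m` which is nonnegative on the section satisfies `m n / φ n ≤ m p / φ p` for all such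
pairs, and any `r` separating the two finite families of quotients makes `m - r • φ` nonnegative on
the whole cone. Each cut therefore adds just the line through `φ` to the dual cone, and the cuts by
the coordinates of `h₁ - h₂` together add the antidiagonal image of the dual of `N̄`.
-/

section ConeSection

open PointedCone Module Submodule

lemma dualCoannihilator_span_singleton {K V : Type*} [CommSemiring K] [AddCommMonoid V]
    [Module K V] (φ : Dual K V) : (K ∙ φ).dualCoannihilator = LinearMap.ker φ := by
  rw [← SetLike.coe_set_eq, coe_dualCoannihilator_span]
  ext x
  simp

variable {𝕜 E : Type*} [Field 𝕜] [LinearOrder 𝕜] [AddCommGroup E] [Module 𝕜 E]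

/-- The generators which the double description method of Motzkin assigns to the section of the
cone over `S` by the hyperplane `φ = 0`: the elements of `S` on the hyperplane and, for each pair
of elements of `S` on opposite sides of it, a positive combination of the two that lies on it. -/
def hyperplaneGenerators (φ : Dual 𝕜 E) (S : Set E) : Set E :=
  {x ∈ S | φ x = 0} ∪
    Set.image2 (fun p n ↦ φ p • n - φ n • p) {p ∈ S | 0 < φ p} {n ∈ S | φ n < 0}

lemma finite_hyperplaneGenerators {S : Set E} (hS : S.Finite) (φ : Dual 𝕜 E) :
    (hyperplaneGenerators φ S).Finite :=
  (hS.sep _).union ((hS.sep _).image2 _ (hS.sep _))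

variable [IsStrictOrderedRing 𝕜]

lemma eq_zero_or_pos_of_mem_hull {φ : Dual 𝕜 E} {P : Set E} (hP : ∀ p ∈ P, 0 < φ p) {x : E}
    (hx : x ∈ hull 𝕜 P) : x = 0 ∨ 0 < φ x := by
  induction hx using span_induction with
  | mem p hp => exact .inr (hP p hp)
  | zero => exact .inl rfl
  | add x y _ _ hx hy =>
    rcases hx with rfl | hx
    · simpa using hy
    · rcases hy with rfl | hy
      · simpa using Or.inr hx
      · exact .inr (by simpa using add_pos hx hy)
  | smul r x _ hx =>
    rcases hx with rfl | hx
    · simp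
    · rcases r.2.eq_or_lt with hr | hr
      · exact .inl (by rw [← Nonneg.coe_smul, ← hr, zero_smul])
      · exact .inr (by simpa [← Nonneg.coe_smul] using mul_pos hr hx)

lemma smul_sub_smul_mem_hull_image2 (φ : Dual 𝕜 E) {P N : Set E} {p n : E}
    (hp : p ∈ hull 𝕜 P) (hn : n ∈ hull 𝕜 N) :
    φ p • n - φ n • p ∈ hull 𝕜 (Set.image2 (fun p n ↦ φ p • n - φ n • p) P N) := by
  induction hp, hn using span_induction₂ with
  | mem_mem p n hp hn => exact subset_hull (Set.mem_image2_of_mem hp hn)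
  | zero_left | zero_right => simp
  | add_left p p' n _ _ _ hp hp' =>
    convert add_mem hp hp' using 1
    simp only [map_add]; module
  | add_right p n n' _ _ _ hn hn' =>
    convert add_mem hn hn' using 1
    simp only [map_add]; module
  | smul_left r p n _ _ h =>
    convert smul_mem _ r h using 1
    simp only [← Nonneg.coe_smul, map_smul, smul_eq_mul]; module
  | smul_right r p n _ _ h =>
    convert smul_mem _ r h using 1
    simp only [← Nonneg.coe_smul, map_smul, smul_eq_mul]; module

lemma add_mem_hull_image2 {φ : Dual 𝕜 E} {P N : Set E} (hP : ∀ p ∈ P, 0 < φ p)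
    (hN : ∀ n ∈ N, φ n < 0) {p n : E} (hp : p ∈ hull 𝕜 P) (hn : n ∈ hull 𝕜 N)
    (hpn : φ p + φ n = 0) :
    p + n ∈ hull 𝕜 (Set.image2 (fun p n ↦ φ p • n - φ n • p) P N) := by
  rcases eq_zero_or_pos_of_mem_hull hP hp with rfl | hφp
  · have hφn : φ n = 0 := by simpa using hpn
    have hn_zero : n = 0 :=
      (eq_zero_or_pos_of_mem_hull (φ := -φ) (fun s hs ↦ neg_pos.2 (hN s hs)) hn).resolve_right
        (by simp [hφn])
    simp [hn_zero]
  · refine (PointedCone.smul_mem_iff _ hφp).1 ?_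
    convert smul_sub_smul_mem_hull_image2 φ hp hn using 1
    rw [eq_neg_of_add_eq_zero_right hpn]
    module

lemma hull_hyperplaneGenerators (φ : Dual 𝕜 E) (S : Set E) :
    hull 𝕜 (hyperplaneGenerators φ S) = hull 𝕜 S ⊓ ofSubmodule (LinearMap.ker φ) := by
  apply le_antisymm
  · rw [span_le]
    rintro _ (⟨hx, hφx⟩ | ⟨p, ⟨hp, hφp⟩, n, ⟨hn, hφn⟩, rfl⟩)
    · exact ⟨subset_hull hx, hφx⟩
    · refine ⟨?_, by simp [mul_comm]⟩
      simp only [sub_eq_add_neg, ← neg_smul]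
      exact add_mem (PointedCone.smul_mem _ hφp.le (subset_hull hn))
        (PointedCone.smul_mem _ (neg_nonneg.2 hφn.le) (subset_hull hp))
  · rintro x ⟨hx, hφx⟩
    have hS : S = {x ∈ S | φ x = 0} ∪ ({p ∈ S | 0 < φ p} ∪ {n ∈ S | φ n < 0}) := by
      ext s
      have := lt_trichotomy (φ s) 0
      simp only [Set.mem_union, Set.mem_ofPred_eq]
      tauto
    rw [hS, hull, span_union, span_union] at hx
    obtain ⟨z, hz, y, hy, rfl⟩ := mem_sup.1 hx
    obtain ⟨p, hp, n, hn, rfl⟩ := mem_sup.1 hy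
    have hφz : φ z = 0 :=
      (span_le (p := ofSubmodule (LinearMap.ker φ))).2 (fun s hs ↦ hs.2) hz
    have hφpn : φ p + φ n = 0 := by
      have : φ (z + (p + n)) = 0 := hφx
      rwa [map_add, hφz, zero_add, map_add] at this
    rw [hyperplaneGenerators, hull, span_union]
    exact add_mem (mem_sup_left hz) (mem_sup_right
      (add_mem_hull_image2 (fun s hs ↦ hs.2) (fun s hs ↦ hs.2) hp hn hφpn))

lemma upperBounds_inter_lowerBounds_nonempty {α : Type*} [LinearOrder α] [Nonempty α]
    {s t : Set α} (hs : s.Finite) (ht : t.Finite) (h : ∀ x ∈ s, ∀ y ∈ t, x ≤ y) :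
    (upperBounds s ∩ lowerBounds t).Nonempty := by
  rcases s.eq_empty_or_nonempty with rfl | hne
  · simpa using show (lowerBounds t).Nonempty from ht.bddBelow
  · obtain ⟨x, hx, hmax⟩ := s.exists_max_image id hs hne
    exact ⟨x, hmax, h x hx⟩

lemma exists_sub_smul_mem_dual (φ m : Dual 𝕜 E) {S : Set E} (hS : S.Finite)
    (hm : m ∈ dual (Dual.eval 𝕜 E) (hyperplaneGenerators φ S)) :
    ∃ r : 𝕜, m - r • φ ∈ dual (Dual.eval 𝕜 E) S := by
  obtain ⟨r, hneg, hpos⟩ := upperBounds_inter_lowerBounds_nonempty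
    ((hS.sep (φ · < 0)).image fun n ↦ m n / φ n) ((hS.sep (0 < φ ·)).image fun p ↦ m p / φ p) (by
      rintro _ ⟨n, ⟨hn, hφn⟩, rfl⟩ _ ⟨p, ⟨hp, hφp⟩, rfl⟩
      have hpn : 0 ≤ m (φ p • n - φ n • p) := hm (.inr ⟨p, ⟨hp, hφp⟩, n, ⟨hn, hφn⟩, rfl⟩)
      rw [map_sub, map_smul, map_smul, smul_eq_mul, smul_eq_mul] at hpn
      rw [le_div_iff₀ hφp, div_mul_eq_mul_div, div_le_iff_of_neg hφn]
      linarith)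
  refine ⟨r, fun s hs ↦ ?_⟩
  rw [Dual.eval_apply, LinearMap.sub_apply, LinearMap.smul_apply, smul_eq_mul, sub_nonneg]
  rcases lt_trichotomy (φ s) 0 with hφs | hφs | hφs
  · exact (div_le_iff_of_neg hφs).1 (hneg ⟨s, ⟨hs, hφs⟩, rfl⟩)
  · simpa [hφs] using hm (.inl ⟨hs, hφs⟩)
  · exact (le_div_iff₀ hφs).1 (hpos ⟨s, ⟨hs, hφs⟩, rfl⟩)

lemma dual_inf_ker {C : PointedCone 𝕜 E} (hC : C.FG) (φ : Dual 𝕜 E) :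
    dual (Dual.eval 𝕜 E) (C ⊓ ofSubmodule (LinearMap.ker φ) : PointedCone 𝕜 E) =
      dual (Dual.eval 𝕜 E) C ⊔ (𝕜 ∙ φ : Submodule 𝕜 (Dual 𝕜 E)) := by
  obtain ⟨S, rfl⟩ := hC
  apply le_antisymm
  · intro m hm
    rw [← hull_hyperplaneGenerators, dual_hull] at hm
    obtain ⟨r, hr⟩ := exists_sub_smul_mem_dual φ m S.finite_toSet hm
    rw [dual_hull]
    exact mem_sup.2 ⟨_, hr, r • φ, smul_mem _ r (mem_span_singleton_self φ), sub_add_cancel _ _⟩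
  · refine sup_le (dual_anti inf_le_left) fun m hm x hx ↦ ?_
    obtain ⟨r, rfl⟩ := mem_span_singleton.1 hm
    have : φ x = 0 := hx.2
    simp [this]

lemma fg_inf_ker {C : PointedCone 𝕜 E} (hC : C.FG) (φ : Dual 𝕜 E) :
    (C ⊓ ofSubmodule (LinearMap.ker φ)).FG := by
  obtain ⟨S, rfl⟩ := hC
  exact fg_def.2 ⟨_, finite_hyperplaneGenerators S.finite_toSet φ, hull_hyperplaneGenerators φ S⟩

lemma inf_dualCoannihilator_sup (C : PointedCone 𝕜 E) (V W : Submodule 𝕜 (Dual 𝕜 E)) :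
    C ⊓ ofSubmodule (V ⊔ W).dualCoannihilator =
      C ⊓ ofSubmodule V.dualCoannihilator ⊓ ofSubmodule W.dualCoannihilator := by
  rw [dualCoannihilator_sup_eq, ofSubmodule, restrictScalars_inf, inf_assoc]

lemma fg_inf_dualCoannihilator {W : Submodule 𝕜 (Dual 𝕜 E)} (hW : W.FG) {C : PointedCone 𝕜 E}
    (hC : C.FG) : (C ⊓ ofSubmodule W.dualCoannihilator).FG := by
  induction W, hW using fg_induction generalizing C with
  | singleton φ => simpa only [dualCoannihilator_span_singleton] using fg_inf_ker hC φ
  | sup V W _ _ hV hW => simpa only [inf_dualCoannihilator_sup] using hW (hV hC)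

lemma dual_inf_dualCoannihilator {W : Submodule 𝕜 (Dual 𝕜 E)} (hW : W.FG) {C : PointedCone 𝕜 E}
    (hC : C.FG) :
    dual (Dual.eval 𝕜 E) (C ⊓ ofSubmodule W.dualCoannihilator : PointedCone 𝕜 E) =
      dual (Dual.eval 𝕜 E) C ⊔ ofSubmodule W := by
  induction W, hW using fg_induction generalizing C with
  | singleton φ => rw [dualCoannihilator_span_singleton, dual_inf_ker hC]
  | sup V W hV_fg _ hV hW =>
    rw [inf_dualCoannihilator_sup, hW (fg_inf_dualCoannihilator hV_fg hC), hV hC, sup_assoc,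
      ofSubmodule_sup]

lemma dual_inf_ker_eq_sup_range_dualMap {G : Type*} [AddCommGroup G] [Module 𝕜 G]
    [FiniteDimensional 𝕜 G] {C : PointedCone 𝕜 E} (hC : C.FG) (f : E →ₗ[𝕜] G) :
    dual (Dual.eval 𝕜 E) (C ⊓ ofSubmodule (LinearMap.ker f) : PointedCone 𝕜 E) =
      dual (Dual.eval 𝕜 E) C ⊔ ofSubmodule (LinearMap.range f.dualMap) := by
  have hker : (LinearMap.range f.dualMap).dualCoannihilator = LinearMap.ker f := by
    rw [LinearMap.range_dualMap_eq_dualAnnihilator_ker,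
      Subspace.dualAnnihilator_dualCoannihilator_eq]
  rw [← hker]
  exact dual_inf_dualCoannihilator FG.of_finite hC

end ConeSection

section Rational

open PointedCone Module Submodule

variable {A 𝕜 E E₁ E₂ : Type*} [CommRing A] [Field 𝕜] [LinearOrder 𝕜] [IsStrictOrderedRing 𝕜]
  [AddCommGroup E] [Module 𝕜 E] [Module A E]
  [AddCommGroup E₁] [Module 𝕜 E₁] [Module A E₁] [AddCommGroup E₂] [Module 𝕜 E₂] [Module A E₂]

/-- A cone is rational polyhedral with respect to the `A`-submodule `L` (a lattice, for `A = ℤ`)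
if it is generated by finitely many elements of `L`. -/
def IsRationalPolyhedral (L : Submodule A E) (C : PointedCone 𝕜 E) : Prop :=
  ∃ S : Set E, S.Finite ∧ S ⊆ L ∧ hull 𝕜 S = C

namespace IsRationalPolyhedral

lemma fg {L : Submodule A E} {C : PointedCone 𝕜 E} (hC : IsRationalPolyhedral L C) : C.FG := by
  obtain ⟨S, hS, -, hSC⟩ := hC
  exact fg_def.2 ⟨S, hS, hSC⟩

lemma prod {L₁ : Submodule A E₁} {L₂ : Submodule A E₂} {C₁ : PointedCone 𝕜 E₁}
    {C₂ : PointedCone 𝕜 E₂} (hC₁ : IsRationalPolyhedral L₁ C₁) (hC₂ : IsRationalPolyhedral L₂ C₂) :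
    IsRationalPolyhedral (L₁.prod L₂) (C₁.prod C₂) := by
  obtain ⟨S₁, hS₁, hSL₁, rfl⟩ := hC₁
  obtain ⟨S₂, hS₂, hSL₂, rfl⟩ := hC₂
  refine ⟨_, (hS₁.image _).union (hS₂.image _), ?_, LinearMap.span_inl_union_inr⟩
  rintro _ (⟨x, hx, rfl⟩ | ⟨y, hy, rfl⟩)
  · exact ⟨hSL₁ hx, L₂.zero_mem⟩
  · exact ⟨L₁.zero_mem, hSL₂ hy⟩

variable [Algebra A 𝕜] [IsScalarTower A 𝕜 E]

lemma inf_ker {L : Submodule A E} {C : PointedCone 𝕜 E} (hC : IsRationalPolyhedral L C)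
    {φ : Dual 𝕜 E} (hφ : ∀ x ∈ L, φ x ∈ (algebraMap A 𝕜).range) :
    IsRationalPolyhedral L (C ⊓ ofSubmodule (LinearMap.ker φ)) := by
  obtain ⟨S, hS, hSL, rfl⟩ := hC
  refine ⟨_, finite_hyperplaneGenerators hS φ, ?_, hull_hyperplaneGenerators φ S⟩
  have smul_mem_of_mem {x y : E} (hx : x ∈ L) (hy : y ∈ L) : φ x • y ∈ L := by
    obtain ⟨r, hr⟩ := hφ x hx
    rw [← hr, algebraMap_smul]
    exact L.smul_mem r hy
  rintro _ (⟨hx, -⟩ | ⟨p, ⟨hp, -⟩, n, ⟨hn, -⟩, rfl⟩)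
  · exact hSL hx
  · exact L.sub_mem (smul_mem_of_mem (hSL hp) (hSL hn)) (smul_mem_of_mem (hSL hn) (hSL hp))

lemma inf_ker_pi {ι : Type*} [Finite ι] {L : Submodule A E} {C : PointedCone 𝕜 E}
    (hC : IsRationalPolyhedral L C) {f : E →ₗ[𝕜] ι → 𝕜}
    (hf : ∀ x ∈ L, ∀ i, f x i ∈ (algebraMap A 𝕜).range) :
    IsRationalPolyhedral L (C ⊓ ofSubmodule (LinearMap.ker f)) := by
  classical
  cases nonempty_fintype ι
  have hsection (s : Finset ι) :
      IsRationalPolyhedral L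
        (C ⊓ ofSubmodule (⨅ i ∈ s, LinearMap.ker (LinearMap.proj i ∘ₗ f))) := by
    induction s using Finset.induction_on with
    | empty => simpa [ofSubmodule] using hC
    | insert i s _ hs =>
      rw [Finset.iInf_insert, inf_comm (LinearMap.ker _), ofSubmodule, restrictScalars_inf,
        ← inf_assoc]
      exact hs.inf_ker fun x hx ↦ hf x hx i
  convert hsection Finset.univ
  ext x
  simp [funext_iff]

lemma inf_of_le {L : Submodule A E} {C : PointedCone 𝕜 E} (hC : IsRationalPolyhedral L C)
    {K : Submodule 𝕜 E} (hK : C ≤ ofSubmodule K) :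
    IsRationalPolyhedral (L ⊓ K.restrictScalars A) C := by
  obtain ⟨S, hS, hSL, rfl⟩ := hC
  exact ⟨S, hS, fun x hx ↦ ⟨hSL hx, hK (subset_hull hx)⟩, rfl⟩

end IsRationalPolyhedral

end Rational

section FiberProduct

open PointedCone Module Submodule

variable {𝕜 E₁ E₂ G : Type*} [Field 𝕜] [LinearOrder 𝕜] [IsStrictOrderedRing 𝕜]
  [AddCommGroup E₁] [Module 𝕜 E₁] [AddCommGroup E₂] [Module 𝕜 E₂] [AddCommGroup G] [Module 𝕜 G]

/-- The fiber product `C₁ ×_G C₂` of two cones, as a subcone of the product. -/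
def fiberProduct (f₁ : E₁ →ₗ[𝕜] G) (f₂ : E₂ →ₗ[𝕜] G) (C₁ : PointedCone 𝕜 E₁)
    (C₂ : PointedCone 𝕜 E₂) : PointedCone 𝕜 (E₁ × E₂) :=
  C₁.prod C₂ ⊓ ofSubmodule (LinearMap.ker (f₁.coprod (-f₂)))

lemma mem_fiberProduct {f₁ : E₁ →ₗ[𝕜] G} {f₂ : E₂ →ₗ[𝕜] G} {C₁ : PointedCone 𝕜 E₁}
    {C₂ : PointedCone 𝕜 E₂} {v : E₁ × E₂} :
    v ∈ fiberProduct f₁ f₂ C₁ C₂ ↔ v.1 ∈ C₁ ∧ v.2 ∈ C₂ ∧ f₁ v.1 = f₂ v.2 := by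
  simp [fiberProduct, and_assoc, ← sub_eq_add_neg, sub_eq_zero]

lemma coprod_mem_dual_prod {C₁ : PointedCone 𝕜 E₁} {C₂ : PointedCone 𝕜 E₂} {m₁ : Dual 𝕜 E₁}
    {m₂ : Dual 𝕜 E₂} :
    m₁.coprod m₂ ∈ dual (Dual.eval 𝕜 (E₁ × E₂)) (C₁.prod C₂ : PointedCone 𝕜 (E₁ × E₂)) ↔
      m₁ ∈ dual (Dual.eval 𝕜 E₁) C₁ ∧ m₂ ∈ dual (Dual.eval 𝕜 E₂) C₂ := by
  refine ⟨fun h ↦ ⟨fun x hx ↦ ?_, fun y hy ↦ ?_⟩, fun h v hv ↦ add_nonneg (h.1 hv.1) (h.2 hv.2)⟩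
  · simpa using h (show (x, 0) ∈ C₁.prod C₂ from ⟨hx, zero_mem _⟩)
  · simpa using h (show (0, y) ∈ C₁.prod C₂ from ⟨zero_mem _, hy⟩)

theorem coprod_mem_dual_fiberProduct [FiniteDimensional 𝕜 G] (f₁ : E₁ →ₗ[𝕜] G)
    (f₂ : E₂ →ₗ[𝕜] G) {C₁ : PointedCone 𝕜 E₁} {C₂ : PointedCone 𝕜 E₂} (hC₁ : C₁.FG) (hC₂ : C₂.FG)
    {m₁ : Dual 𝕜 E₁} {m₂ : Dual 𝕜 E₂} :
    m₁.coprod m₂ ∈ dual (Dual.eval 𝕜 (E₁ × E₂)) (fiberProduct f₁ f₂ C₁ C₂) ↔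
      ∃ n₁ ∈ dual (Dual.eval 𝕜 E₁) C₁, ∃ n₂ ∈ dual (Dual.eval 𝕜 E₂) C₂, ∃ g : Dual 𝕜 G,
        m₁ - n₁ = g ∘ₗ f₁ ∧ m₂ - n₂ = -(g ∘ₗ f₂) := by
  rw [fiberProduct, dual_inf_ker_eq_sup_range_dualMap (hC₁.prod hC₂), mem_sup]
  constructor
  · rintro ⟨n, hn, _, ⟨g, rfl⟩, hsum⟩
    rw [← LinearMap.coprod_comp_inl_inr n, coprod_mem_dual_prod] at hn
    refine ⟨_, hn.1, _, hn.2, g, ?_, ?_⟩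
    · rw [← LinearMap.coprod_inl m₁ m₂, ← hsum]; ext; simp
    · rw [← LinearMap.coprod_inr m₁ m₂, ← hsum]; ext; simp
  · rintro ⟨n₁, hn₁, n₂, hn₂, g, h₁, h₂⟩
    refine ⟨n₁.coprod n₂, coprod_mem_dual_prod.2 ⟨hn₁, hn₂⟩, _, ⟨g, rfl⟩, ?_⟩
    rw [← sub_add_cancel m₁ n₁, h₁, ← sub_add_cancel m₂ n₂, h₂]
    ext <;> simp <;> abel

theorem IsRationalPolyhedral.fiberProduct {A ι : Type*} [CommRing A] [Algebra A 𝕜] [Module A E₁]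
    [IsScalarTower A 𝕜 E₁] [Module A E₂] [IsScalarTower A 𝕜 E₂] [Finite ι] {L₁ : Submodule A E₁}
    {L₂ : Submodule A E₂} {f₁ : E₁ →ₗ[𝕜] ι → 𝕜} {f₂ : E₂ →ₗ[𝕜] ι → 𝕜}
    (hf₁ : ∀ x ∈ L₁, ∀ i, f₁ x i ∈ (algebraMap A 𝕜).range)
    (hf₂ : ∀ y ∈ L₂, ∀ i, f₂ y i ∈ (algebraMap A 𝕜).range)
    {C₁ : PointedCone 𝕜 E₁} {C₂ : PointedCone 𝕜 E₂}
    (hC₁ : IsRationalPolyhedral L₁ C₁) (hC₂ : IsRationalPolyhedral L₂ C₂) :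
    IsRationalPolyhedral
      (L₁.prod L₂ ⊓ (LinearMap.ker (f₁.coprod (-f₂))).restrictScalars A)
      (fiberProduct f₁ f₂ C₁ C₂) :=
  have hf : ∀ v ∈ L₁.prod L₂, ∀ i, f₁.coprod (-f₂) v i ∈ (algebraMap A 𝕜).range := fun v hv i ↦ by
    simpa [← sub_eq_add_neg] using Subring.sub_mem _ (hf₁ v.1 hv.1 i) (hf₂ v.2 hv.2 i)
  ((hC₁.prod hC₂).inf_ker_pi hf).inf_of_le inf_le_right

end FiberProduct

section Coordinates

open PointedCone Module

lemma coneHull_eq_hull {E : Type*} [AddCommMonoid E] [Module ℝ E] (S : Set E) :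
    coneHull S = hull ℝ S := by
  ext x
  constructor
  · rintro ⟨T, c, hTS, hc, rfl⟩
    exact sum_mem fun t ht ↦ PointedCone.smul_mem _ (hc t) (subset_hull (hTS ht))
  · rintro hx
    obtain ⟨c, hcS, hc, rfl⟩ := mem_hull_set.1 hx
    exact ⟨c.support, c, hcS, hc, rfl⟩

/-- The inclusion `toRa` of `ℤ^a` into `ℝ^a` as a `ℤ`-linear map; its range is the standard
lattice in `ℝ^a`. -/
def toRaLinearMap (a : ℕ) : (Fin a → ℤ) →ₗ[ℤ] (Fin a → ℝ) :=
  (Algebra.linearMap ℤ ℝ).compLeft (Fin a)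

lemma coe_toRaLinearMap (a : ℕ) : ⇑(toRaLinearMap a) = toRa := rfl

lemma toRa_injective (a : ℕ) : Function.Injective (toRa (a := a)) :=
  Int.cast_injective.comp_left

lemma realify_toRa {a b : ℕ} (f : (Fin a → ℤ) →ₗ[ℤ] (Fin b → ℤ)) (v : Fin a → ℤ) :
    realify f (toRa v) = toRa (f v) := by
  ext k
  rw [← LinearMap.toMatrix'_mulVec f v]
  exact (RingHom.map_mulVec (Int.castRingHom ℝ) (LinearMap.toMatrix' f) v k).symm

lemma isRationalPolyhedral_hull_toRa {a : ℕ} (S : Finset (Fin a → ℤ)) :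
    IsRationalPolyhedral (LinearMap.range (toRaLinearMap a)) (hull ℝ (toRa '' (S : Set _))) :=
  ⟨_, S.finite_toSet.image _, Set.image_subset_range _ _, rfl⟩

lemma realify_apply_mem_range {a b : ℕ} (f : (Fin a → ℤ) →ₗ[ℤ] (Fin b → ℤ)) {x : Fin a → ℝ}
    (hx : x ∈ LinearMap.range (toRaLinearMap a)) (k : Fin b) :
    realify f x k ∈ (algebraMap ℤ ℝ).range := by
  obtain ⟨v, rfl⟩ := hx
  exact ⟨f v k, (congrFun (realify_toRa f v) k).symm⟩

variable {a b c : ℕ} (h1 : (Fin a → ℤ) →ₗ[ℤ] (Fin c → ℤ)) (h2 : (Fin b → ℤ) →ₗ[ℤ] (Fin c → ℤ))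

lemma exists_finset_fiberProduct_eq_coneHull (S1 : Finset (Fin a → ℤ)) (S2 : Finset (Fin b → ℤ)) :
    ∃ T : Finset ((Fin a → ℤ) × (Fin b → ℤ)), (∀ t ∈ T, h1 t.1 = h2 t.2) ∧
      (fiberProduct (realify h1) (realify h2) (hull ℝ (toRa '' (S1 : Set _)))
        (hull ℝ (toRa '' (S2 : Set _))) : Set ((Fin a → ℝ) × (Fin b → ℝ))) =
      coneHull ((fun t : (Fin a → ℤ) × (Fin b → ℤ) ↦ (toRa t.1, toRa t.2)) '' (T : Set _)) := by
  classical
  obtain ⟨S, hS, hSL, hSC⟩ := IsRationalPolyhedral.fiberProduct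
    (fun _ hx ↦ realify_apply_mem_range h1 hx) (fun _ hy ↦ realify_apply_mem_range h2 hy)
    (isRationalPolyhedral_hull_toRa S1) (isRationalPolyhedral_hull_toRa S2)
  lift S to Finset ((Fin a → ℝ) × (Fin b → ℝ)) using hS
  have hS_image : (S : Set ((Fin a → ℝ) × (Fin b → ℝ))) ⊆
      (fun t ↦ (toRa t.1, toRa t.2)) '' {t : (Fin a → ℤ) × (Fin b → ℤ) | h1 t.1 = h2 t.2} := by
    rintro ⟨_, _⟩ hs
    obtain ⟨⟨⟨u, rfl⟩, ⟨v, rfl⟩⟩, hker⟩ := hSL hs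
    refine ⟨(u, v), toRa_injective c ?_, rfl⟩
    rw [← realify_toRa, ← realify_toRa]
    simpa [coe_toRaLinearMap, ← sub_eq_add_neg, sub_eq_zero] using hker
  obtain ⟨T, hT, rfl⟩ := Finset.subset_set_image_iff.1 hS_image
  exact ⟨T, hT, by rw [← hSC, coneHull_eq_hull, Finset.coe_image]⟩

lemma dotProductEquiv_mem_dual_hull {n : ℕ} {S : Set (Fin n → ℝ)} {m : Fin n → ℝ} :
    dotProductEquiv ℝ (Fin n) m ∈ dual (Dual.eval ℝ (Fin n → ℝ)) (hull ℝ S) ↔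
      ∀ v ∈ coneHull S, 0 ≤ ∑ i, m i * v i := by
  rw [coneHull_eq_hull]
  rfl

lemma coprod_mem_dual_fiberProduct_hull {m : (Fin a → ℝ) × (Fin b → ℝ)}
    (S1 : Finset (Fin a → ℤ)) (S2 : Finset (Fin b → ℤ)) :
    (dotProductEquiv ℝ (Fin a) m.1).coprod (dotProductEquiv ℝ (Fin b) m.2) ∈
      dual (Dual.eval ℝ ((Fin a → ℝ) × (Fin b → ℝ))) (fiberProduct (realify h1) (realify h2)
        (hull ℝ (toRa '' (S1 : Set _))) (hull ℝ (toRa '' (S2 : Set _)))) ↔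
      ∃ m1 : Fin a → ℝ, (∀ v1 ∈ coneHull (toRa '' (S1 : Set _)), 0 ≤ ∑ i, m1 i * v1 i) ∧
      ∃ m2 : Fin b → ℝ, (∀ v2 ∈ coneHull (toRa '' (S2 : Set _)), 0 ≤ ∑ i, m2 i * v2 i) ∧
      ∃ mb : Fin c → ℝ,
        (∀ v1 : Fin a → ℝ, ∑ i, (m.1 i - m1 i) * v1 i = ∑ k, mb k * realify h1 v1 k) ∧
        (∀ v2 : Fin b → ℝ, ∑ i, (m.2 i - m2 i) * v2 i = -∑ k, mb k * realify h2 v2 k) := by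
  rw [coprod_mem_dual_fiberProduct _ _ (isRationalPolyhedral_hull_toRa S1).fg
    (isRationalPolyhedral_hull_toRa S2).fg]
  simp only [(dotProductEquiv ℝ (Fin a)).surjective.exists,
    (dotProductEquiv ℝ (Fin b)).surjective.exists, (dotProductEquiv ℝ (Fin c)).surjective.exists,
    dotProductEquiv_mem_dual_hull, LinearMap.ext_iff, ← map_sub]
  rfl

lemma setOf_mem_coneHull_eq_fiberProduct (S1 : Set (Fin a → ℝ)) (S2 : Set (Fin b → ℝ)) :
    {v : (Fin a → ℝ) × (Fin b → ℝ) |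
        v.1 ∈ coneHull S1 ∧ v.2 ∈ coneHull S2 ∧ realify h1 v.1 = realify h2 v.2} =
      fiberProduct (realify h1) (realify h2) (hull ℝ S1) (hull ℝ S2) := by
  ext v
  simp [coneHull_eq_hull, mem_fiberProduct]

end Coordinates

theorem stmt_2_general {a b c : ℕ}
    (h1 : (Fin a → ℤ) →ₗ[ℤ] (Fin c → ℤ)) (h2 : (Fin b → ℤ) →ₗ[ℤ] (Fin c → ℤ))
    (S1 : Finset (Fin a → ℤ)) (S2 : Finset (Fin b → ℤ)) :
    (∃ T : Finset ((Fin a → ℤ) × (Fin b → ℤ)),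
      (∀ t ∈ T, h1 t.1 = h2 t.2) ∧
      {v : (Fin a → ℝ) × (Fin b → ℝ) |
          v.1 ∈ coneHull (toRa '' (S1 : Set _)) ∧ v.2 ∈ coneHull (toRa '' (S2 : Set _)) ∧
          realify h1 v.1 = realify h2 v.2}
        = coneHull ((fun t : (Fin a → ℤ) × (Fin b → ℤ) ↦ (toRa t.1, toRa t.2)) '' (T : Set _)))
    ∧
    ({m : (Fin a → ℝ) × (Fin b → ℝ) |
        ∀ v ∈ {v : (Fin a → ℝ) × (Fin b → ℝ) |
            v.1 ∈ coneHull (toRa '' (S1 : Set _)) ∧ v.2 ∈ coneHull (toRa '' (S2 : Set _)) ∧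
            realify h1 v.1 = realify h2 v.2},
          0 ≤ (∑ i, m.1 i * v.1 i) + (∑ i, m.2 i * v.2 i)}
      = {m : (Fin a → ℝ) × (Fin b → ℝ) |
          ∃ m1 : Fin a → ℝ, (∀ v1 ∈ coneHull (toRa '' (S1 : Set _)), 0 ≤ ∑ i, m1 i * v1 i) ∧
          ∃ m2 : Fin b → ℝ, (∀ v2 ∈ coneHull (toRa '' (S2 : Set _)), 0 ≤ ∑ i, m2 i * v2 i) ∧
          ∃ mb : Fin c → ℝ,
            (∀ v1 : Fin a → ℝ, ∑ i, (m.1 i - m1 i) * v1 i = ∑ k, mb k * realify h1 v1 k) ∧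
            (∀ v2 : Fin b → ℝ, ∑ i, (m.2 i - m2 i) * v2 i = -∑ k, mb k * realify h2 v2 k)}) := by
  rw [setOf_mem_coneHull_eq_fiberProduct]
  exact ⟨exists_finset_fiberProduct_eq_coneHull h1 h2 S1 S2,
    Set.ext fun m ↦ coprod_mem_dual_fiberProduct_hull h1 h2 S1 S2⟩

/-- Let `N1 = ℤ^a, N2 = ℤ^b, N̄ = ℤ^c` with surjective homomorphisms
`h1 : N1 → N̄`, `h2 : N2 → N̄`, and let `σ1, σ2` be strictly convex rational
polyhedral cones (generated by the finite lattice sets `S1, S2`) with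
`σ̄ = h1(σ1) = h2(σ2)` (also strictly convex).  Then:
(1) the fiber product `σ1 ×_{N̄} σ2 = {(v1,v2) | v_i ∈ σ_i, h1 v1 = h2 v2}` is a
rational polyhedral cone on the lattice `N1 ×_{N̄} N2`, i.e. it is generated by
finitely many lattice points of `N1 ×_{N̄} N2`; and
(2) its dual cone is the image of `σ1^∨ × σ2^∨` under the natural surjection
`M1 ⊕ M2 → (M1 ⊕ M2)/M̄` (with `M̄` embedded antidiagonally by
`m ↦ (h1^* m, -h2^* m)`): concretely, in the full dual space a functional `m` is
nonnegative on `σ1 ×_{N̄} σ2` iff it is a sum `(m1, m2) + w` with `m_i ∈ σ_i^∨` and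
`w` in the antidiagonal copy of `M̄ ⊗ ℝ`. -/
theorem stmt_2 (a b c : ℕ)
    (h1 : (Fin a → ℤ) →ₗ[ℤ] (Fin c → ℤ)) (h2 : (Fin b → ℤ) →ₗ[ℤ] (Fin c → ℤ))
    (hs1 : Function.Surjective h1) (hs2 : Function.Surjective h2)
    (S1 : Finset (Fin a → ℤ)) (S2 : Finset (Fin b → ℤ))
    (hc1 : ∀ x, x ∈ coneHull (toRa '' (S1 : Set (Fin a → ℤ))) → -x ∈ coneHull (toRa '' (S1 : Set (Fin a → ℤ))) → x = 0)
    (hc2 : ∀ x, x ∈ coneHull (toRa '' (S2 : Set (Fin b → ℤ))) → -x ∈ coneHull (toRa '' (S2 : Set (Fin b → ℤ))) → x = 0)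
    (hbar : realify h1 '' coneHull (toRa '' (S1 : Set (Fin a → ℤ))) = realify h2 '' coneHull (toRa '' (S2 : Set (Fin b → ℤ))))
    (hbarconv : ∀ x, x ∈ realify h1 '' coneHull (toRa '' (S1 : Set (Fin a → ℤ))) →
      -x ∈ realify h1 '' coneHull (toRa '' (S1 : Set (Fin a → ℤ))) → x = 0) :
    (∃ T : Finset ((Fin a → ℤ) × (Fin b → ℤ)),
      (∀ t ∈ T, h1 t.1 = h2 t.2) ∧
      {v : (Fin a → ℝ) × (Fin b → ℝ) |
          v.1 ∈ coneHull (toRa '' (S1 : Set (Fin a → ℤ))) ∧ v.2 ∈ coneHull (toRa '' (S2 : Set (Fin b → ℤ))) ∧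
          realify h1 v.1 = realify h2 v.2}
        = coneHull ((fun t : (Fin a → ℤ) × (Fin b → ℤ) => (toRa t.1, toRa t.2)) '' (T : Set ((Fin a → ℤ) × (Fin b → ℤ)))))
    ∧
    ({m : (Fin a → ℝ) × (Fin b → ℝ) |
        ∀ v ∈ {v : (Fin a → ℝ) × (Fin b → ℝ) |
            v.1 ∈ coneHull (toRa '' (S1 : Set (Fin a → ℤ))) ∧ v.2 ∈ coneHull (toRa '' (S2 : Set (Fin b → ℤ))) ∧
            realify h1 v.1 = realify h2 v.2},
          0 ≤ (∑ i, m.1 i * v.1 i) + (∑ i, m.2 i * v.2 i)}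
      = {m : (Fin a → ℝ) × (Fin b → ℝ) |
          ∃ m1 : Fin a → ℝ, (∀ v1 ∈ coneHull (toRa '' (S1 : Set (Fin a → ℤ))), 0 ≤ ∑ i, m1 i * v1 i) ∧
          ∃ m2 : Fin b → ℝ, (∀ v2 ∈ coneHull (toRa '' (S2 : Set (Fin b → ℤ))), 0 ≤ ∑ i, m2 i * v2 i) ∧
          ∃ mb : Fin c → ℝ,
            (∀ v1 : Fin a → ℝ, ∑ i, (m.1 i - m1 i) * v1 i = ∑ k, mb k * realify h1 v1 k) ∧
            (∀ v2 : Fin b → ℝ, ∑ i, (m.2 i - m2 i) * v2 i = -∑ k, mb k * realify h2 v2 k)}) :=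
  stmt_2_general h1 h2 S1 S2
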